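/- Plugging the optimal weights α*_i = (m_i/M_p)·[ 1 + M_p·(L̄_p − L̂_i)/λ ]_+ into the objective F(α) = Σ_{i=1}^N α_i·L̂_i + (λ/2)·Σ_{i=1}^N α_i²/m_i yields the concentrated objective: F(α*) = Σ_{i=1}^N [ m_i/M_p + m_i·(L̄_p − L̂_i)/λ ]_+ · ( L̂_i + (1/2)·[ λ/M_p + L̄_p − L̂_i ]_+ ). -/

import Mathlib

open Finset

noncomputable section

/-- `Mpart m k = Σ_{i=1}^k m_i`: total number of samples of the first `k` clients
(clients are 0-indexed, so these are clients `0, …, k-1`). -/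
def Mpart (m : ℕ → ℝ) (k : ℕ) : ℝ := ∑ i ∈ Finset.range k, m i

/-- `Lbar m L k = (Σ_{i=1}^k m_i·L̂_i) / M_k`: the `k`-average loss. -/
def Lbar (m L : ℕ → ℝ) (k : ℕ) : ℝ :=
  (∑ i ∈ Finset.range k, m i * L i) / Mpart m k

/-- The set `{ k ∈ {1, …, N} : 1 + M_k·(L̄_k − L̂_k)/λ > 0 }`
(with `L̂_k = L (k-1)` since losses are 0-indexed). -/
def goodSet (m L : ℕ → ℝ) (lam : ℝ) (N : ℕ) : Set ℕ :=
  {k | k ∈ Finset.Icc 1 N ∧ 0 < 1 + Mpart m k * (Lbar m L k - L (k - 1)) / lam}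

/-- `p = max{ k ∈ {1,…,N} : 1 + M_k·(L̄_k − L̂_k)/λ > 0 }`. -/
def pIdx (m L : ℕ → ℝ) (lam : ℝ) (N : ℕ) : ℕ := sSup (goodSet m L lam N)

/-- The optimal weights `α*_i = (m_i/M_p)·[1 + M_p·(L̄_p − L̂_i)/λ]₊` (client `i` 0-indexed). -/
def alphaStar (m L : ℕ → ℝ) (lam : ℝ) (N : ℕ) (i : ℕ) : ℝ :=
  (m i / Mpart m (pIdx m L lam N)) *
    max 0 (1 + Mpart m (pIdx m L lam N) * (Lbar m L (pIdx m L lam N) - L i) / lam)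

/-- The objective `F(α) = Σ_i α_i·L̂_i + (λ/2)·Σ_i α_i²/m_i`. -/
def objF (N : ℕ) (m L : ℕ → ℝ) (lam : ℝ) (α : ℕ → ℝ) : ℝ :=
  ∑ i ∈ Finset.range N, α i * L i + lam / 2 * ∑ i ∈ Finset.range N, (α i) ^ 2 / m i

/-!
With `τ = λ/M_p + L̄_p`, both positive parts on the right-hand side and the one in `α*` are positive
multiples of `[τ - L̂_i]₊`; in particular `α*_i = (m_i/λ)·[τ - L̂_i]₊`. For weights of the form
`α_i = (m_i/λ)·y_i` the regularizer `(λ/2)·α_i²/m_i` is `α_i·y_i/2`, so the identity holds term by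
term, for any `M > 0` and any real number in place of `M_p` and `L̄_p`. That `M_p > 0` rests on the
maximum defining `p` being attained: `L̄_1 = L̂_1` makes `k = 1` admissible.
-/

theorem max_zero_mul_of_nonneg {c : ℝ} (hc : 0 ≤ c) (x : ℝ) :
    max 0 (c * x) = c * max 0 x := by
  rw [mul_max_of_nonneg _ _ hc, mul_zero]

section Objective

variable {N : ℕ} {m : ℕ → ℝ} {lam : ℝ}

theorem objF_div_mul (hm : ∀ i < N, m i ≠ 0) (hlam : lam ≠ 0) (L y : ℕ → ℝ) :
    objF N m L lam (fun i ↦ m i / lam * y i) =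
      ∑ i ∈ range N, m i / lam * y i * (L i + 1 / 2 * y i) := by
  rw [objF, mul_sum, ← sum_add_distrib]
  refine sum_congr rfl fun i hi ↦ ?_
  have hmi : m i ≠ 0 := hm i (mem_range.1 hi)
  field_simp

theorem div_mul_max_zero_one_add {M : ℝ} (hM : 0 < M) (hlam : 0 < lam) (w B ℓ : ℝ) :
    w / M * max 0 (1 + M * (B - ℓ) / lam) = w / lam * max 0 (lam / M + B - ℓ) := by
  have factor : 1 + M * (B - ℓ) / lam = M / lam * (lam / M + B - ℓ) := by
    field_simp
    ring
  rw [factor, max_zero_mul_of_nonneg (by positivity)]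
  field_simp

theorem max_zero_div_add_mul_sub_div {M w : ℝ} (hM : M ≠ 0) (hlam : 0 < lam) (hw : 0 ≤ w)
    (B ℓ : ℝ) :
    max 0 (w / M + w * (B - ℓ) / lam) = w / lam * max 0 (lam / M + B - ℓ) := by
  have factor : w / M + w * (B - ℓ) / lam = w / lam * (lam / M + B - ℓ) := by
    field_simp
    ring
  rw [factor, max_zero_mul_of_nonneg (by positivity)]

theorem objF_alphaStar_concentrated_general (hm : ∀ i < N, 0 < m i) (hlam : 0 < lam)
    {M : ℝ} (hM : 0 < M) (B : ℝ) (L : ℕ → ℝ) :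
    objF N m L lam (fun i ↦ m i / M * max 0 (1 + M * (B - L i) / lam)) =
      ∑ i ∈ range N, max 0 (m i / M + m i * (B - L i) / lam) *
        (L i + 1 / 2 * max 0 (lam / M + B - L i)) := by
  simp only [div_mul_max_zero_one_add hM hlam]
  rw [objF_div_mul (fun i hi ↦ (hm i hi).ne') hlam.ne']
  refine sum_congr rfl fun i hi ↦ ?_
  rw [max_zero_div_add_mul_sub_div hM.ne' hlam (hm i (mem_range.1 hi)).le]

end Objective

section Index

variable {N : ℕ} {m : ℕ → ℝ}

theorem Mpart_pos {k : ℕ} (hk : 1 ≤ k) (hm : ∀ i < k, 0 < m i) : 0 < Mpart m k :=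
  sum_pos (fun i hi ↦ hm i (mem_range.1 hi)) ⟨0, mem_range.2 hk⟩

theorem Lbar_one (hm : m 0 ≠ 0) (L : ℕ → ℝ) : Lbar m L 1 = L 0 := by
  simp [Lbar, Mpart, hm]

theorem one_mem_goodSet (hN : 1 ≤ N) (hm : m 0 ≠ 0) (L : ℕ → ℝ) (lam : ℝ) :
    1 ∈ goodSet m L lam N :=
  ⟨mem_Icc.2 ⟨le_rfl, hN⟩, by simp [Lbar_one hm]⟩

theorem bddAbove_goodSet (L : ℕ → ℝ) (lam : ℝ) : BddAbove (goodSet m L lam N) :=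
  ⟨N, fun _ hk ↦ (mem_Icc.1 hk.1).2⟩

theorem pIdx_mem_goodSet (hN : 1 ≤ N) (hm : m 0 ≠ 0) (L : ℕ → ℝ) (lam : ℝ) :
    pIdx m L lam N ∈ goodSet m L lam N :=
  Nat.sSup_mem ⟨1, one_mem_goodSet hN hm L lam⟩ (bddAbove_goodSet L lam)

theorem Mpart_pIdx_pos (hN : 1 ≤ N) (hm : ∀ i < N, 0 < m i) (L : ℕ → ℝ) (lam : ℝ) :
    0 < Mpart m (pIdx m L lam N) := by
  obtain ⟨one_le, le_N⟩ := mem_Icc.1 (pIdx_mem_goodSet hN (hm 0 hN).ne' L lam).1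
  exact Mpart_pos one_le fun i hi ↦ hm i (hi.trans_le le_N)

end Index

/-- plugging `α*` into the objective yields the concentrated objective. -/
theorem objF_alphaStar_concentrated
    (N : ℕ) (hN : 1 ≤ N) (m L : ℕ → ℝ)
    (hm : ∀ i < N, 0 < m i)
    (hL : ∀ i j, i ≤ j → j < N → L i ≤ L j)
    (lam : ℝ) (hlam : 0 < lam) :
    objF N m L lam (alphaStar m L lam N) =
      ∑ i ∈ Finset.range N,
        max 0 (m i / Mpart m (pIdx m L lam N) +
            m i * (Lbar m L (pIdx m L lam N) - L i) / lam) *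
          (L i + (1 / 2) *
            max 0 (lam / Mpart m (pIdx m L lam N) +
              Lbar m L (pIdx m L lam N) - L i)) :=
  objF_alphaStar_concentrated_general hm hlam (Mpart_pIdx_pos hN hm L lam) _ L
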